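/- arXiv:1804.00542 — 10 statements merged into one kernel-verified Lean document; each statement's English description precedes it below -/
import Mathlib

section
/- For all positive real numbers x and y, the product of the arithmetic mean and the geometric mean of x and y is at least the product of the quadratic mean and the harmonic mean of x and y; that is, ((x+y)/2) · √(xy) ≥ √((x²+y²)/2) · (2xy/(x+y)). -/
theorem AG_ge_QH (x y : ℝ) (hx : 0 < x) (hy : 0 < y) :
    ((x + y) / 2) * Real.sqrt (x * y) ≥
      Real.sqrt ((x ^ 2 + y ^ 2) / 2) * (2 * x * y / (x + y)) := by
  have hg : Real.sqrt (x * y) ^ 2 = x * y := Real.sq_sqrt (by positivity)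
  have hq : Real.sqrt ((x ^ 2 + y ^ 2) / 2) ^ 2 = (x ^ 2 + y ^ 2) / 2 :=
    Real.sq_sqrt (by positivity)
  have hg0 := Real.sqrt_nonneg (x * y)
  generalize Real.sqrt (x * y) = g at *
  generalize Real.sqrt ((x ^ 2 + y ^ 2) / 2) = q at *
  have h : 4 * (q * g) ≤ (x + y) ^ 2 := by nlinarith [sq_nonneg (q - g)]
  have h2 : 4 * (q * g) * g ≤ (x + y) ^ 2 * g := mul_le_mul_of_nonneg_right h hg0
  have h3 : q * (2 * x * y / (x + y)) = q * (2 * g ^ 2) / (x + y) := by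
    rw [hg]; ring
  rw [ge_iff_le, h3, div_le_iff₀ (by positivity)]
  nlinarith
end

section
/- For all positive real numbers x and y, equality A·G = Q·H holds if and only if x = y, where A = (x+y)/2, G = √(xy), Q = √((x²+y²)/2), and H = 2xy/(x+y). -/
theorem AG_eq_QH_iff (x y : ℝ) (hx : 0 < x) (hy : 0 < y) :
    ((x + y) / 2) * Real.sqrt (x * y) =
      Real.sqrt ((x ^ 2 + y ^ 2) / 2) * (2 * x * y / (x + y)) ↔ x = y := by
  constructor
  · intro h
    have hs : 0 < x + y := by positivity
    have hp : 0 < x * y := by positivity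
    have h2 := congrArg (fun t => t ^ 2) h
    simp only [mul_pow] at h2
    rw [Real.sq_sqrt hp.le, Real.sq_sqrt (by positivity)] at h2
    field_simp at h2
    have h3 : (x * y) * (x - y) ^ 4 = 0 := by
      first
        | linear_combination h2
        | linear_combination (x * y) * h2
        | linear_combination 2 * h2
    have h4 : (x - y) ^ 4 = 0 := (mul_eq_zero.mp h3).resolve_left hp.ne'
    exact sub_eq_zero.mp (pow_eq_zero_iff (by norm_num) |>.mp h4)
  · rintro rfl
    have e1 : (x ^ 2 + x ^ 2) / 2 = x * x := by ring
    rw [e1, Real.sqrt_mul_self hx.le]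
    field_simp
    try ring
end

section
/- For all positive real numbers x and y and every integer n, the inequality Aⁿ + Gⁿ ≤ Qⁿ + Hⁿ holds, where A = (x+y)/2, G = √(xy), Q = √((x²+y²)/2), and H = 2xy/(x+y) (here powers are integer powers, i.e. zpow). -/
lemma le_of_sq_le_sq_aux {u v : ℝ} (h : u ^ 2 ≤ v ^ 2) (hv : 0 ≤ v) : u ≤ v :=
  (le_abs_self u).trans (abs_le_of_sq_le_sq h hv)

lemma aux_convex (a g q : ℝ) (ha : 0 < a) (hg : 0 < g) (hq : 0 < q)
    (h : q ^ 2 + g ^ 2 = 2 * a ^ 2) (n : ℤ) (hn : n ≠ 1) :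
    2 * a ^ n ≤ q ^ n + g ^ n := by
  rcases le_or_gt n 0 with h0 | h0
  · have h1 : q * g ≤ a ^ 2 := by nlinarith [sq_nonneg (q - g)]
    have h2 : (q * g) ^ (-n) ≤ (a ^ 2) ^ (-n) :=
      zpow_le_zpow_left₀ (by omega) (by positivity) h1
    have h3 : (a ^ 2) ^ n ≤ (q * g) ^ n := by
      rw [zpow_neg, zpow_neg] at h2
      exact (inv_le_inv₀ (by positivity) (by positivity)).1 h2
    have h4 : (a ^ 2) ^ n = (a ^ n) ^ 2 := by
      rw [pow_two, mul_zpow, pow_two]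
    rw [h4, mul_zpow] at h3
    have hA : 0 < a ^ n := by positivity
    have hG : 0 < g ^ n := by positivity
    have hQ : 0 < q ^ n := by positivity
    refine le_of_sq_le_sq_aux ?_ (by positivity)
    nlinarith [sq_nonneg (q ^ n - g ^ n)]
  · have hp : (1 : ℝ) ≤ (n : ℝ) / 2 := by
      have : (2 : ℤ) ≤ n := by omega
      have : (2 : ℝ) ≤ n := by exact_mod_cast this
      linarith
    have key : ∀ z : ℝ, 0 < z → (z ^ 2) ^ ((n : ℝ) / 2) = z ^ n := by
      intro z hz
      rw [← Real.rpow_natCast, ← Real.rpow_mul hz.le, ← Real.rpow_intCast]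
      congr 1
      push_cast
      ring
    have hc := (convexOn_rpow hp).2 (Set.mem_Ici.2 (sq_nonneg q)) (Set.mem_Ici.2 (sq_nonneg g))
      (show (0 : ℝ) ≤ 1 / 2 by norm_num) (show (0 : ℝ) ≤ 1 / 2 by norm_num) (by norm_num)
    simp only [smul_eq_mul] at hc
    rw [show 1 / 2 * q ^ 2 + 1 / 2 * g ^ 2 = a ^ 2 by linarith, key a ha, key q hq, key g hg] at hc
    linarith

theorem pow_mean_ineq (x y : ℝ) (hx : 0 < x) (hy : 0 < y) (n : ℤ) :
    ((x + y) / 2) ^ n + Real.sqrt (x * y) ^ n ≤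
      Real.sqrt ((x ^ 2 + y ^ 2) / 2) ^ n + (2 * x * y / (x + y)) ^ n := by
  have hgs : Real.sqrt (x * y) ^ 2 = x * y := Real.sq_sqrt (by positivity)
  have hqs : Real.sqrt ((x ^ 2 + y ^ 2) / 2) ^ 2 = (x ^ 2 + y ^ 2) / 2 :=
    Real.sq_sqrt (by positivity)
  have hg : 0 < Real.sqrt (x * y) := by positivity
  have hq : 0 < Real.sqrt ((x ^ 2 + y ^ 2) / 2) := by positivity
  have ha : 0 < (x + y) / 2 := by positivity
  have hh : 0 < 2 * x * y / (x + y) := by positivity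
  have hah : (x + y) / 2 * (2 * x * y / (x + y)) = Real.sqrt (x * y) ^ 2 := by
    rw [hgs]; field_simp
  have hsum : Real.sqrt ((x ^ 2 + y ^ 2) / 2) ^ 2 + Real.sqrt (x * y) ^ 2
      = 2 * ((x + y) / 2) ^ 2 := by rw [hgs, hqs]; ring
  have hga : Real.sqrt (x * y) ≤ (x + y) / 2 := by
    refine le_of_sq_le_sq_aux ?_ ha.le
    rw [hgs]; nlinarith [sq_nonneg (x - y)]
  generalize Real.sqrt (x * y) = g at *
  generalize Real.sqrt ((x ^ 2 + y ^ 2) / 2) = q at *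
  generalize 2 * x * y / (x + y) = h at *
  generalize (x + y) / 2 = a at *
  by_cases hn : n = 1
  · subst hn
    simp only [zpow_one]
    have h1 : a * (a + g - h) ≤ a * q := by
      refine le_of_sq_le_sq_aux ?_ (by positivity)
      have e1 : a * (a + g - h) = a ^ 2 + a * g - g ^ 2 := by rw [← hah]; ring
      have e2 : (a * q) ^ 2 = a ^ 2 * (2 * a ^ 2 - g ^ 2) := by
        rw [← hsum]; ring
      rw [e1, e2]
      have : 0 ≤ (a - g) ^ 3 * (a + g) :=
        mul_nonneg (pow_nonneg (by linarith) 3) (by linarith)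
      nlinarith
    have := le_of_mul_le_mul_left h1 ha
    linarith
  · have hc := aux_convex a g q ha hg hq hsum n hn
    have hA : 0 < a ^ n := by positivity
    have e : a ^ n * h ^ n = (g ^ n) ^ 2 := by
      rw [← mul_zpow, hah, pow_two, mul_zpow, pow_two]
    have : 0 ≤ a ^ n - 2 * g ^ n + h ^ n := by
      refine nonneg_of_mul_nonneg_right ?_ hA
      nlinarith [sq_nonneg (a ^ n - g ^ n)]
    linarith
end

section
/- For all positive real numbers x and y and every nonzero integer n, equality Aⁿ + Gⁿ = Qⁿ + Hⁿ holds if and only if x = y, where A = (x+y)/2, G = √(xy), Q = √((x²+y²)/2), and H = 2xy/(x+y). -/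
theorem aux_pow (A G Q : ℝ) (hG : 0 < G) (hA : 0 < A) (hQ : 0 < Q) (hGA : G < A) (hAQ : A < Q)
    (h : G ^ 2 + Q ^ 2 = 2 * A ^ 2) (k : ℕ) : 2 * A ^ (k + 2) ≤ Q ^ (k + 2) + G ^ (k + 2) := by
  induction k with
  | zero => simp only [zero_add]; linarith
  | succ k ih =>
    have hs : Q + G ≤ 2 * A := by nlinarith [sq_nonneg (Q - G)]
    have h1 : 0 ≤ (Q - A) * Q + (G - A) * G := by nlinarith
    have h2 : G ^ (k + 1) ≤ Q ^ (k + 1) := pow_le_pow_left₀ hG.le (by linarith) _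
    have h3 : 0 ≤ (Q - A) * Q * (Q ^ (k + 1) - G ^ (k + 1)) :=
      mul_nonneg (mul_nonneg (by linarith) hQ.le) (by linarith)
    have h4 : 0 ≤ G ^ (k + 1) * ((Q - A) * Q + (G - A) * G) := mul_nonneg (by positivity) h1
    have h5 := mul_le_mul_of_nonneg_left ih hA.le
    have e1 : Q ^ (k + 1 + 2) + G ^ (k + 1 + 2) = A * (Q ^ (k + 2) + G ^ (k + 2))
      + (Q - A) * Q * (Q ^ (k + 1) - G ^ (k + 1)) + G ^ (k + 1) * ((Q - A) * Q + (G - A) * G) := by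
      ring
    have e2 : 2 * A ^ (k + 1 + 2) = A * (2 * A ^ (k + 2)) := by ring
    linarith

theorem aux_zpow (A G Q : ℝ) (hG : 0 < G) (hA : 0 < A) (hQ : 0 < Q) (hGA : G < A) (hAQ : A < Q)
    (h : G ^ 2 + Q ^ 2 = 2 * A ^ 2) (n : ℤ) (hn : n ≠ 0) (hn1 : n ≠ 1) :
    2 * A ^ n ≤ Q ^ n + G ^ n := by
  rcases lt_or_gt_of_ne hn with hneg | hpos
  · obtain ⟨k, rfl⟩ : ∃ k : ℕ, n = -(k : ℤ) := ⟨n.natAbs, by omega⟩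
    have hQG : Q * G ≤ A ^ 2 := by nlinarith [sq_nonneg (Q - G)]
    have h1 : (Q * G) ^ k ≤ (A ^ 2) ^ k := pow_le_pow_left₀ (by positivity) hQG k
    have h2 : ((A ^ 2) ^ k)⁻¹ ≤ ((Q * G) ^ k)⁻¹ := inv_anti₀ (by positivity) h1
    simp only [zpow_neg, zpow_natCast]
    have ha : 0 < (A ^ k)⁻¹ := by positivity
    have hq : 0 < (Q ^ k)⁻¹ := by positivity
    have hg : 0 < (G ^ k)⁻¹ := by positivity
    have h3 : (A ^ k)⁻¹ ^ 2 ≤ (Q ^ k)⁻¹ * (G ^ k)⁻¹ := by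
      calc (A ^ k)⁻¹ ^ 2 = ((A ^ 2) ^ k)⁻¹ := by rw [inv_pow, ← pow_mul, ← pow_mul, mul_comm]
        _ ≤ ((Q * G) ^ k)⁻¹ := h2
        _ = _ := by rw [mul_pow, mul_inv]
    generalize (A ^ k)⁻¹ = a at *
    generalize (Q ^ k)⁻¹ = q at *
    generalize (G ^ k)⁻¹ = g at *
    nlinarith [sq_nonneg (q - g)]
  · obtain ⟨k, rfl⟩ : ∃ k : ℕ, n = ((k + 2 : ℕ) : ℤ) := ⟨(n - 2).toNat, by omega⟩
    simp only [zpow_natCast]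
    exact aux_pow A G Q hG hA hQ hGA hAQ h k

theorem aux_main (A G Q H : ℝ) (hG : 0 < G) (hA : 0 < A) (hQ : 0 < Q) (hH : 0 < H) (hGA : G < A)
    (h : G ^ 2 + Q ^ 2 = 2 * A ^ 2) (hAH : A * H = G ^ 2) (n : ℤ) (hn : n ≠ 0) :
    A ^ n + G ^ n ≠ Q ^ n + H ^ n := by
  intro e
  have hAQ : A < Q := by nlinarith
  by_cases hn1 : n = 1
  · subst hn1
    simp only [zpow_one] at e
    have e1 : Q * A = A ^ 2 + A * G - G ^ 2 := by rw [← hAH]; linear_combination -A * e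
    have e2 : (A ^ 2 - G ^ 2) * (A - G) ^ 2 = 0 := by
      linear_combination (Q * A + A ^ 2 + A * G - G ^ 2) * e1 - A ^ 2 * h
    have : 0 < (A ^ 2 - G ^ 2) * (A - G) ^ 2 :=
      mul_pos (by nlinarith) (pow_pos (by linarith) 2)
    linarith
  · have h1 := aux_zpow A G Q hG hA hQ hGA hAQ h n hn hn1
    have h2 : A ^ n * H ^ n = (G ^ n) ^ 2 := by
      rw [← mul_zpow, hAH, sq, sq, mul_zpow]
    have h3 : A ^ n ≠ G ^ n := fun h3 => hGA.ne' ((zpow_left_inj₀ hA.le hG.le hn).1 h3)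
    have ha : 0 < A ^ n := by positivity
    have h4 : 0 < (A ^ n - G ^ n) ^ 2 := by
      have := sub_ne_zero.2 h3
      positivity
    nlinarith

theorem pow_mean_eq_iff (x y : ℝ) (hx : 0 < x) (hy : 0 < y) (n : ℤ) (hn : n ≠ 0) :
    ((x + y) / 2) ^ n + Real.sqrt (x * y) ^ n =
      Real.sqrt ((x ^ 2 + y ^ 2) / 2) ^ n + (2 * x * y / (x + y)) ^ n ↔ x = y := by
  constructor
  · intro e
    by_contra hne
    have hp : 0 < (x - y) ^ 2 := by
      have := sub_ne_zero.2 hne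
      positivity
    have hG2 : Real.sqrt (x * y) ^ 2 = x * y := Real.sq_sqrt (by positivity)
    have hQ2 : Real.sqrt ((x ^ 2 + y ^ 2) / 2) ^ 2 = (x ^ 2 + y ^ 2) / 2 :=
      Real.sq_sqrt (by positivity)
    refine aux_main ((x + y) / 2) (Real.sqrt (x * y)) (Real.sqrt ((x ^ 2 + y ^ 2) / 2))
      (2 * x * y / (x + y)) (by positivity) (by positivity) (by positivity) (by positivity)
      ?_ ?_ ?_ n hn e
    · rw [Real.sqrt_lt' (by positivity)]
      nlinarith
    · rw [hG2, hQ2]; ring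
    · rw [hG2]; field_simp
  · rintro rfl
    have h1 : (x + x) / 2 = x := by ring
    have h2 : Real.sqrt (x * x) = x := Real.sqrt_mul_self hx.le
    have h3 : (x ^ 2 + x ^ 2) / 2 = x * x := by ring
    have h4 : 2 * x * x / (x + x) = x := by field_simp; ring
    rw [h3, h1, h2, h4]
end

section
/- Let a, b, c, d be positive real numbers such that a + b ≤ c + d and ab ≥ cd. Then for every integer n, aⁿ + bⁿ ≤ cⁿ + dⁿ (integer powers, including negative exponents). -/
theorem zpow_sum_aux (a b c d : ℝ) (ha : 0 < a) (hb : 0 < b) (hc : 0 < c) (hd : 0 < d)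
    (hsum : a + b ≤ c + d) (hprod : a * b ≥ c * d) (hab : b ≤ a) (hcd : d ≤ c) (n : ℤ) :
    a ^ n + b ^ n ≤ c ^ n + d ^ n := by
  have hdb : d ≤ b := by
    by_contra h
    push Not at h
    have h1 : a ≤ d := by
      by_contra h2
      push Not at h2
      nlinarith [mul_pos (sub_pos.2 h2) (sub_pos.2 h), mul_nonneg hd.le (sub_nonneg.2 hsum)]
    nlinarith [mul_pos ha (sub_pos.2 h), mul_nonneg hd.le (sub_nonneg.2 (h1.trans hcd))]
  have hac : a ≤ c := by
    by_contra h
    push Not at h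
    have h1 : c ≤ b := by
      by_contra h2
      push Not at h2
      nlinarith [mul_pos (sub_pos.2 h2) (sub_pos.2 h), mul_nonneg hc.le (sub_nonneg.2 hsum)]
    linarith
  have key : ∀ m : ℕ, b ^ m - d ^ m ≤ c ^ m - a ^ m := by
    intro m
    induction m with
    | zero => simp
    | succ k ih =>
      have h0 : 0 ≤ b ^ k - d ^ k := sub_nonneg.2 (pow_le_pow_left₀ hd.le hdb k)
      have h1 : d ^ k ≤ a ^ k := pow_le_pow_left₀ hd.le (hdb.trans hab) k
      have h2 : b * (b ^ k - d ^ k) ≤ c * (c ^ k - a ^ k) :=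
        mul_le_mul (hab.trans hac) ih h0 hc.le
      have h3 : d ^ k * (b - d) ≤ a ^ k * (c - a) :=
        mul_le_mul h1 (by linarith) (by linarith) (by positivity)
      simp only [pow_succ]
      linarith
  obtain ⟨m, rfl | rfl⟩ := n.eq_nat_or_neg
  · simp only [zpow_natCast]
    linarith [key m]
  · simp only [zpow_neg, zpow_natCast]
    have hx : 0 < (c ^ m)⁻¹ := by positivity
    have h1 : (c ^ m)⁻¹ ≤ (a ^ m)⁻¹ :=
      inv_anti₀ (by positivity) (pow_le_pow_left₀ ha.le hac m)
    have h2 : (c ^ m)⁻¹ ≤ (b ^ m)⁻¹ :=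
      inv_anti₀ (by positivity) (pow_le_pow_left₀ hb.le (hab.trans hac) m)
    have h3 : (a ^ m)⁻¹ * (b ^ m)⁻¹ ≤ (c ^ m)⁻¹ * (d ^ m)⁻¹ := by
      rw [← mul_inv, ← mul_inv, ← mul_pow, ← mul_pow]
      exact inv_anti₀ (by positivity) (pow_le_pow_left₀ (by positivity) hprod m)
    refine le_of_mul_le_mul_left ?_ hx
    nlinarith [mul_nonneg (sub_nonneg.2 h1) (sub_nonneg.2 h2)]

theorem zpow_sum_le (a b c d : ℝ) (ha : 0 < a) (hb : 0 < b) (hc : 0 < c) (hd : 0 < d)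
    (hsum : a + b ≤ c + d) (hprod : a * b ≥ c * d) (n : ℤ) :
    a ^ n + b ^ n ≤ c ^ n + d ^ n := by
  rcases le_total b a with h | h <;> rcases le_total d c with h' | h'
  · exact zpow_sum_aux a b c d ha hb hc hd hsum hprod h h' n
  · linarith [zpow_sum_aux a b d c ha hb hd hc (by linarith) (by linarith) h h' n]
  · linarith [zpow_sum_aux b a c d hb ha hc hd (by linarith) (by linarith) h h' n]
  · linarith [zpow_sum_aux b a d c hb ha hd hc (by linarith) (by linarith) h h' n]
end

section
/- Let a, b, c, d be positive real numbers such that a + b ≤ c + d and ab ≥ cd. Then for every natural number n, aⁿ + bⁿ ≤ cⁿ + dⁿ. -/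
theorem pow_sum_core (a b c d : ℝ) (hd : 0 < d) (hdb : d ≤ b) (hba : b ≤ a) (hac : a ≤ c)
    (hsum : a + b ≤ c + d) (n : ℕ) : a ^ n + b ^ n ≤ c ^ n + d ^ n := by
  induction n with
  | zero => simp
  | succ k ih =>
    have h1 : d ^ k ≤ b ^ k := pow_le_pow_left₀ hd.le hdb k
    have h2 : d ^ k ≤ a ^ k := pow_le_pow_left₀ hd.le (hdb.trans hba) k
    have h3 : 0 < d ^ k := pow_pos hd k
    have h4 : b * (b ^ k - d ^ k) ≤ c * (c ^ k - a ^ k) :=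
      mul_le_mul (hba.trans hac) (by linarith) (by linarith) (by linarith)
    have h5 : d ^ k * (b - d) ≤ a ^ k * (c - a) :=
      mul_le_mul h2 (by linarith) (by linarith) (by linarith)
    simp only [pow_succ]
    linarith

theorem pow_sum_ordered (a b c d : ℝ) (hb : 0 < b) (hd : 0 < d)
    (hba : b ≤ a) (hdc : d ≤ c)
    (hsum : a + b ≤ c + d) (hprod : a * b ≥ c * d) (n : ℕ) :
    a ^ n + b ^ n ≤ c ^ n + d ^ n := by
  have hac : a ≤ c := by
    by_contra! h
    have h1 : b < d := by linarith
    nlinarith [mul_pos (sub_pos.2 h) (sub_pos.2 (h1.trans_le hdc))]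
  rcases le_total d b with h | h
  · exact pow_sum_core a b c d hd h hba hac hsum n
  · exact add_le_add (pow_le_pow_left₀ (hb.le.trans hba) hac n) (pow_le_pow_left₀ hb.le h n)

theorem pow_sum_le (a b c d : ℝ) (ha : 0 < a) (hb : 0 < b) (hc : 0 < c) (hd : 0 < d)
    (hsum : a + b ≤ c + d) (hprod : a * b ≥ c * d) (n : ℕ) :
    a ^ n + b ^ n ≤ c ^ n + d ^ n := by
  rcases le_total b a with h | h <;> rcases le_total d c with h' | h'
  · exact pow_sum_ordered a b c d hb hd h h' hsum hprod n
  · have := pow_sum_ordered a b d c hb hc h h' (by linarith) (by linarith) n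
    linarith
  · have := pow_sum_ordered b a c d ha hd h h' (by linarith) (by linarith) n
    linarith
  · have := pow_sum_ordered b a d c ha hc h h' (by linarith) (by linarith) n
    linarith
end

section
/- For all positive real numbers x and y, (√(2(x²+y²)) + √(4xy))/2 ≤ x + y. -/
theorem sqrt_avg_le (x y : ℝ) (hx : 0 < x) (hy : 0 < y) :
    (Real.sqrt (2 * (x ^ 2 + y ^ 2)) + Real.sqrt (4 * (x * y))) / 2 ≤ x + y := by
  have ha := Real.sq_sqrt (show 0 ≤ 2 * (x ^ 2 + y ^ 2) by positivity)
  have hb := Real.sq_sqrt (show 0 ≤ 4 * (x * y) by positivity)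
  have hs : 0 ≤ x + y := by positivity
  refine abs_le_of_sq_le_sq' ?_ hs |>.2
  nlinarith [sq_nonneg (Real.sqrt (2 * (x ^ 2 + y ^ 2)) - Real.sqrt (4 * (x * y)))]
end

section
/- For all positive real numbers x and y, Q − G ≥ A − H, where A = (x+y)/2, G = √(xy), Q = √((x²+y²)/2), and H = 2xy/(x+y). -/
theorem QG_ge_AH (x y : ℝ) (hx : 0 < x) (hy : 0 < y) :
    Real.sqrt ((x ^ 2 + y ^ 2) / 2) - Real.sqrt (x * y) ≥
      (x + y) / 2 - 2 * x * y / (x + y) := by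
  have hs : 0 < x + y := by positivity
  have hQ2 : Real.sqrt ((x ^ 2 + y ^ 2) / 2) ^ 2 = (x ^ 2 + y ^ 2) / 2 :=
    Real.sq_sqrt (by positivity)
  have hG2 : Real.sqrt (x * y) ^ 2 = x * y := Real.sq_sqrt (by positivity)
  have hQG : Real.sqrt (x * y) ≤ Real.sqrt ((x ^ 2 + y ^ 2) / 2) :=
    Real.sqrt_le_sqrt (by nlinarith [sq_nonneg (x - y)])
  generalize Real.sqrt ((x ^ 2 + y ^ 2) / 2) = Q at *
  generalize Real.sqrt (x * y) = G at *
  have hsum : Q + G ≤ x + y :=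
    abs_le_of_sq_le_sq' (by nlinarith [sq_nonneg (Q - G)]) hs.le |>.2
  have e : (x + y) / 2 - 2 * x * y / (x + y) = (Q - G) * (Q + G) / (x + y) := by
    have : (Q - G) * (Q + G) = (x - y) ^ 2 / 2 := by linear_combination hQ2 - hG2
    rw [this]
    field_simp
    ring
  rw [e, ge_iff_le, div_le_iff₀ hs]
  exact mul_le_mul_of_nonneg_left hsum (by linarith)
end

section
/- For all positive real numbers x and y, A + G ≤ Q + H, where A = (x+y)/2, G = √(xy), Q = √((x²+y²)/2), and H = 2xy/(x+y); equality holds if and only if x = y. -/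
theorem AG_lt_QH_aux (x y : ℝ) (hx : 0 < x) (hy : 0 < y) (hne : x ≠ y) :
    (x + y) / 2 + Real.sqrt (x * y) <
      Real.sqrt ((x ^ 2 + y ^ 2) / 2) + 2 * x * y / (x + y) := by
  have hg : 0 < Real.sqrt (x * y) := Real.sqrt_pos.mpr (mul_pos hx hy)
  have hg2 : Real.sqrt (x * y) ^ 2 = x * y := Real.sq_sqrt (mul_pos hx hy).le
  set g := Real.sqrt (x * y) with hgdef
  obtain ⟨a, ha⟩ : ∃ a, a = (x + y) / 2 := ⟨_, rfl⟩
  have ha0 : 0 < a := by rw [ha]; linarith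
  have hxy : 0 < (x - y) ^ 2 := by
    have := sub_ne_zero.mpr hne
    positivity
  have hga : g < a := by
    apply lt_of_pow_lt_pow_left₀ 2 ha0.le
    rw [hg2, ha]; nlinarith
  have hH : 2 * x * y / (x + y) = g ^ 2 / a := by
    rw [hg2, ha]; field_simp
  have hQ : (x ^ 2 + y ^ 2) / 2 = 2 * a ^ 2 - g ^ 2 := by
    rw [hg2, ha]; ring
  rw [hH, hQ, ← ha]
  have key : a + g - g ^ 2 / a < Real.sqrt (2 * a ^ 2 - g ^ 2) := by
    apply Real.lt_sqrt_of_sq_lt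
    have h1 : 2 * a ^ 2 - g ^ 2 - (a + g - g ^ 2 / a) ^ 2 = (a - g) ^ 3 * (a + g) / a ^ 2 := by
      field_simp; ring
    have h2 : 0 < (a - g) ^ 3 * (a + g) / a ^ 2 := by
      have : 0 < a - g := sub_pos.mpr hga
      positivity
    linarith
  linarith

theorem AG_le_QH_sum (x y : ℝ) (hx : 0 < x) (hy : 0 < y) :
    ((x + y) / 2 + Real.sqrt (x * y) ≤
      Real.sqrt ((x ^ 2 + y ^ 2) / 2) + 2 * x * y / (x + y)) ∧
    ((x + y) / 2 + Real.sqrt (x * y) =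
      Real.sqrt ((x ^ 2 + y ^ 2) / 2) + 2 * x * y / (x + y) ↔ x = y) := by
  by_cases h : x = y
  · subst h
    have e : (x + x) / 2 + Real.sqrt (x * x) =
        Real.sqrt ((x ^ 2 + x ^ 2) / 2) + 2 * x * x / (x + x) := by
      have h1 : (x ^ 2 + x ^ 2) / 2 = x * x := by ring
      have h2 : 2 * x * x / (x + x) = x := by field_simp; ring
      rw [h1, h2, Real.sqrt_mul_self hx.le]; ring
    exact ⟨e.le, fun _ => rfl, fun _ => e⟩
  · have := AG_lt_QH_aux x y hx hy h
    exact ⟨this.le, fun e => absurd e this.ne, fun e => absurd e h⟩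
end

section
/- For all positive real numbers x and y, √(Q·H) ≤ √(A·G), where A = (x+y)/2, G = √(xy), Q = √((x²+y²)/2), and H = 2xy/(x+y). -/
theorem sqrt_QH_le_sqrt_AG (x y : ℝ) (hx : 0 < x) (hy : 0 < y) :
    Real.sqrt (Real.sqrt ((x ^ 2 + y ^ 2) / 2) * (2 * x * y / (x + y))) ≤
      Real.sqrt (((x + y) / 2) * Real.sqrt (x * y)) := by
  apply Real.sqrt_le_sqrt
  have hs : 0 < x + y := by positivity
  have hp : 0 < x * y := by positivity
  refine (pow_le_pow_iff_left₀ (by positivity) (by positivity) (two_ne_zero)).mp ?_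
  rw [mul_pow, mul_pow, Real.sq_sqrt (by positivity), Real.sq_sqrt hp.le, div_pow,
    ← mul_div_assoc, div_le_iff₀ (by positivity)]
  have h : 0 ≤ x * y * ((x - y) ^ 2) ^ 2 := by positivity
  nlinarith [h]
end
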